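/- arXiv:1610.04740 — 2 statements merged into one kernel-verified Lean document; each statement's English description precedes it below -/
import Mathlib

section
/- For all real numbers x > 0 and y > 0, the integral H_{2,2,1}(x,y) = ∫₀^∞ (u+1)^{-2}(ux+1)^{-2}(uy+1)^{-1} u^{7/2} du converges and equals π(2(x^{3/2} + 4x + 4√x + 1)y + (7x^{3/2} + x² + 13x + 7√x + 1)√y + (x + 3√x + 1)y^{3/2} + 2(√x + 1)³√x)/(2(√x + 1)³ x^{3/2} (√y + 1)² √y (√x + √y)²). -/
open MeasureTheory Real

/-!
With `k_x(u) = u / (ux + 1)`, the integrand is `u^(-3/2) k_1(u)² k_x(u)² k_y(u)`, so its integral is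
obtained from `∫₀^∞ u^(-3/2) k_x(u) du = π / √x` by adjoining the kernels `k_1, k_1, k_x, k_x` one
at a time. The resolvent identity `k_p - k_x = (x - p) k_p k_x` shows that adjoining `k_p` replaces
a transform `F` by its divided difference `x ↦ (F p - F x) / (x - p)`. In terms of `√x` the factor
`√x - √p` cancels from every divided difference that occurs, and the quotient that remains gives the
value at `x = p` as well, by continuity.
-/

open Filter Set Topology

/-- The resolvent kernel `(u⁻¹ + x)⁻¹`, written so that its value at `u = 0` is its limit there. -/
noncomputable def resolventKernel (x u : ℝ) : ℝ := u / (u * x + 1)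

lemma resolventKernel_nonneg {x u : ℝ} (hx : 0 ≤ x) (hu : 0 ≤ u) : 0 ≤ resolventKernel x u := by
  unfold resolventKernel
  positivity

lemma resolventKernel_le_inv {x u : ℝ} (hx : 0 < x) (hu : 0 ≤ u) : resolventKernel x u ≤ x⁻¹ := by
  rw [resolventKernel, inv_eq_one_div, div_le_div_iff₀ (by positivity) hx]
  linarith

lemma abs_resolventKernel_le {c x u : ℝ} (hc : 0 < c) (hcx : c ≤ x) (hu : 0 ≤ u) :
    |resolventKernel x u| ≤ c⁻¹ := by
  rw [abs_of_nonneg (resolventKernel_nonneg (hc.le.trans hcx) hu)]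
  exact (resolventKernel_le_inv (hc.trans_le hcx) hu).trans (inv_anti₀ hc hcx)

lemma resolventKernel_sub {p x u : ℝ} (hp : 0 ≤ p) (hx : 0 ≤ x) (hu : 0 ≤ u) :
    resolventKernel p u - resolventKernel x u =
      (x - p) * (resolventKernel p u * resolventKernel x u) := by
  have hp' : u * p + 1 ≠ 0 := by positivity
  have hx' : u * x + 1 ≠ 0 := by positivity
  unfold resolventKernel
  field_simp
  ring

lemma continuousAt_resolventKernel_left {x u : ℝ} (hx : 0 ≤ x) (hu : 0 ≤ u) :
    ContinuousAt (fun z ↦ resolventKernel z u) x := by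
  have hx' : u * x + 1 ≠ 0 := by positivity
  unfold resolventKernel
  fun_prop (disch := assumption)

@[fun_prop]
lemma measurable_resolventKernel (x : ℝ) : Measurable (resolventKernel x) := by
  unfold resolventKernel
  fun_prop

/-- `F` is the transform `x ↦ ∫ w(u) (u⁻¹ + x)⁻¹ dμ(u)` of the weight `w`, where the integral
converges for every `x > 0`. In the variable `u⁻¹` this is a Stieltjes transform. -/
def HasStieltjesTransform (μ : Measure ℝ) (w F : ℝ → ℝ) : Prop :=
  ∀ x, 0 < x → Integrable (fun u ↦ w u * resolventKernel x u) μ ∧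
    ∫ u, w u * resolventKernel x u ∂μ = F x

section DividedDifference

variable {μ : Measure ℝ} {f w F D : ℝ → ℝ} {p x : ℝ}

lemma integrable_mul_resolventKernel (hμ : ∀ᵐ u ∂μ, 0 ≤ u) (hf : Integrable f μ)
    (hx : 0 < x) : Integrable (fun u ↦ f u * resolventKernel x u) μ :=
  hf.mul_bdd (measurable_resolventKernel x).aestronglyMeasurable
    (hμ.mono fun _ hu ↦ abs_resolventKernel_le hx le_rfl hu)

lemma continuousAt_integral_mul_resolventKernel (hμ : ∀ᵐ u ∂μ, 0 ≤ u) (hf : Integrable f μ)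
    (hx : 0 < x) : ContinuousAt (fun z ↦ ∫ u, f u * resolventKernel z u ∂μ) x := by
  refine continuousAt_of_dominated (bound := fun u ↦ ‖f u‖ * (x / 2)⁻¹) ?_ ?_
    (hf.norm.mul_const _) ?_
  · exact .of_forall fun z ↦
      hf.aestronglyMeasurable.mul (measurable_resolventKernel z).aestronglyMeasurable
  · filter_upwards [lt_mem_nhds (half_lt_self hx)] with z hz
    filter_upwards [hμ] with u hu
    rw [norm_mul]
    gcongr
    exact abs_resolventKernel_le (half_pos hx) hz.le hu
  · filter_upwards [hμ] with u hu
    exact continuousAt_const.mul (continuousAt_resolventKernel_left hx.le hu)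

namespace HasStieltjesTransform

lemma sub_eq_mul_integral (hμ : ∀ᵐ u ∂μ, 0 ≤ u) (h : HasStieltjesTransform μ w F)
    (hp : 0 < p) (hx : 0 < x) :
    F p - F x = (x - p) * ∫ u, w u * resolventKernel p u * resolventKernel x u ∂μ := by
  rw [← (h p hp).2, ← (h x hx).2, ← integral_sub (h p hp).1 (h x hx).1, ← integral_const_mul]
  refine integral_congr_ae (hμ.mono fun u hu ↦ ?_)
  linear_combination w u * resolventKernel_sub hp.le hx.le hu

theorem mul_resolventKernel (hμ : ∀ᵐ u ∂μ, 0 ≤ u) (h : HasStieltjesTransform μ w F)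
    (hp : 0 < p) (hD : ContinuousAt D p) (hFD : ∀ x, 0 < x → F p - F x = (x - p) * D x) :
    HasStieltjesTransform μ (fun u ↦ w u * resolventKernel p u) D := by
  have eq_of_ne {x : ℝ} (hx : 0 < x) (hxp : x ≠ p) :
      ∫ u, w u * resolventKernel p u * resolventKernel x u ∂μ = D x :=
    mul_left_cancel₀ (sub_ne_zero.2 hxp)
      ((h.sub_eq_mul_integral hμ hp hx).symm.trans (hFD x hx))
  have eq_near : ∀ᶠ x in 𝓝 p,
      ∫ u, w u * resolventKernel p u * resolventKernel x u ∂μ = D x := by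
    refine ((continuousAt_integral_mul_resolventKernel hμ (h p hp).1
      hp).eventuallyEq_nhds_iff_eventuallyEq_nhdsNE hD).1 ?_
    filter_upwards [self_mem_nhdsWithin, nhdsWithin_le_nhds (lt_mem_nhds hp)] with x hxp hx
    exact eq_of_ne hx hxp
  intro x hx
  refine ⟨integrable_mul_resolventKernel hμ (h p hp).1 hx, ?_⟩
  rcases eq_or_ne x p with rfl | hxp
  · exact eq_near.self_of_nhds
  · exact eq_of_ne hx hxp

lemma mul_resolventKernel_of_sqrt (hμ : ∀ᵐ u ∂μ, 0 ≤ u)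
    (h : HasStieltjesTransform μ w (F ∘ sqrt)) (hp : 0 < p) (hD : ContinuousAt D √p)
    (hFD : ∀ s, 0 < s → F √p - F s = (s ^ 2 - p) * D s) :
    HasStieltjesTransform μ (fun u ↦ w u * resolventKernel p u) (D ∘ sqrt) := by
  refine h.mul_resolventKernel hμ hp (hD.comp continuous_sqrt.continuousAt) fun x hx ↦ ?_
  simp only [Function.comp_apply, hFD √x (sqrt_pos.2 hx), sq_sqrt hx.le]

end HasStieltjesTransform

end DividedDifference

lemma ae_restrict_Ioi_nonneg : ∀ᵐ u ∂volume.restrict (Ioi (0 : ℝ)), 0 ≤ u :=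
  (ae_restrict_mem measurableSet_Ioi).mono fun _ hu ↦ le_of_lt hu

lemma hasDerivAt_arctan_mul_sqrt {x u : ℝ} (hx : 0 < x) (hu : 0 < u) :
    HasDerivAt (fun u ↦ 2 / √x * arctan (√x * √u))
      (u ^ (-(3 / 2) : ℝ) * resolventKernel x u) u := by
  have hpow : u ^ (-(3 / 2) : ℝ) = (√u ^ 3)⁻¹ := by
    rw [rpow_neg hu.le, rpow_div_two_eq_sqrt 3 hu.le, rpow_ofNat]
  refine ((((hasDerivAt_sqrt hu.ne').const_mul √x).arctan).const_mul (2 / √x)).congr_deriv ?_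
  rw [hpow, resolventKernel, mul_pow, sq_sqrt hx.le, sq_sqrt hu.le]
  have hden : 1 + x * u ≠ 0 := by positivity
  field_simp
  rw [sq_sqrt hu.le]
  ring

lemma hasStieltjesTransform_rpow :
    HasStieltjesTransform (volume.restrict (Ioi 0)) (fun u ↦ u ^ (-(3 / 2) : ℝ))
      ((fun s ↦ π / s) ∘ sqrt) := by
  intro x hx
  have hsx : 0 < √x := sqrt_pos.2 hx
  have hcont : ContinuousWithinAt (fun u ↦ 2 / √x * arctan (√x * √u)) (Ici 0) 0 := by fun_prop
  have hderiv : ∀ u ∈ Ioi (0 : ℝ), HasDerivAt (fun u ↦ 2 / √x * arctan (√x * √u))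
      (u ^ (-(3 / 2) : ℝ) * resolventKernel x u) u :=
    fun u hu ↦ hasDerivAt_arctan_mul_sqrt hx hu
  have hnonneg : ∀ u ∈ Ioi (0 : ℝ), 0 ≤ u ^ (-(3 / 2) : ℝ) * resolventKernel x u :=
    fun u hu ↦ mul_nonneg (rpow_nonneg (le_of_lt hu) _)
      (resolventKernel_nonneg hx.le (le_of_lt hu))
  have hlim : Tendsto (fun u ↦ 2 / √x * arctan (√x * √u)) atTop (𝓝 (2 / √x * (π / 2))) :=
    ((tendsto_arctan_atTop.mono_right nhdsWithin_le_nhds).comp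
      (tendsto_sqrt_atTop.const_mul_atTop hsx)).const_mul _
  refine ⟨integrableOn_Ioi_deriv_of_nonneg hcont hderiv hnonneg hlim, ?_⟩
  rw [integral_Ioi_of_hasDerivAt_of_nonneg hcont hderiv hnonneg hlim]
  simp only [sqrt_zero, mul_zero, arctan_zero, sub_zero, Function.comp_apply]
  ring

lemma hasStieltjesTransform_rpow_mul_one :
    HasStieltjesTransform (volume.restrict (Ioi 0))
      (fun u ↦ u ^ (-(3 / 2) : ℝ) * resolventKernel 1 u)
      ((fun s ↦ π / (s * (s + 1))) ∘ sqrt) := by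
  refine hasStieltjesTransform_rpow.mul_resolventKernel_of_sqrt
    ae_restrict_Ioi_nonneg one_pos ?_ fun s hs ↦ ?_
  · rw [sqrt_one]
    fun_prop (disch := norm_num)
  · rw [sqrt_one]
    field_simp
    ring

lemma hasStieltjesTransform_rpow_mul_one_sq :
    HasStieltjesTransform (volume.restrict (Ioi 0))
      (fun u ↦ u ^ (-(3 / 2) : ℝ) * resolventKernel 1 u * resolventKernel 1 u)
      ((fun s ↦ π * (s + 2) / (2 * s * (s + 1) ^ 2)) ∘ sqrt) := by
  refine hasStieltjesTransform_rpow_mul_one.mul_resolventKernel_of_sqrt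
    ae_restrict_Ioi_nonneg one_pos ?_ fun s hs ↦ ?_
  · rw [sqrt_one]
    fun_prop (disch := norm_num)
  · rw [sqrt_one]
    field_simp
    ring

lemma hasStieltjesTransform_rpow_mul_one_sq_mul {p : ℝ} (hp : 0 < p) :
    HasStieltjesTransform (volume.restrict (Ioi 0))
      (fun u ↦ u ^ (-(3 / 2) : ℝ) * resolventKernel 1 u * resolventKernel 1 u *
        resolventKernel p u)
      ((fun s ↦ π * (√p * s * (√p + s) + 2 * (√p + s + 1) ^ 2) /
        (2 * √p * s * (√p + 1) ^ 2 * (s + 1) ^ 2 * (√p + s))) ∘ sqrt) := by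
  have hsp : 0 < √p := sqrt_pos.2 hp
  refine hasStieltjesTransform_rpow_mul_one_sq.mul_resolventKernel_of_sqrt
    ae_restrict_Ioi_nonneg hp ?_ fun s hs ↦ ?_
  · fun_prop (disch := positivity)
  · rw [← sq_sqrt hp.le, sqrt_sq hsp.le]
    field_simp
    ring

lemma hasStieltjesTransform_rpow_mul_one_sq_mul_sq {p : ℝ} (hp : 0 < p) :
    HasStieltjesTransform (volume.restrict (Ioi 0))
      (fun u ↦ u ^ (-(3 / 2) : ℝ) * resolventKernel 1 u * resolventKernel 1 u *
        resolventKernel p u * resolventKernel p u)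
      ((fun s ↦ π * (2 * (√p ^ 3 + 4 * √p ^ 2 + 4 * √p + 1) * s ^ 2 +
          (√p ^ 4 + 7 * √p ^ 3 + 13 * √p ^ 2 + 7 * √p + 1) * s +
          (√p ^ 2 + 3 * √p + 1) * s ^ 3 + 2 * (√p + 1) ^ 3 * √p) /
        (2 * (√p + 1) ^ 3 * √p ^ 3 * (s + 1) ^ 2 * s * (√p + s) ^ 2)) ∘ sqrt) := by
  have hsp : 0 < √p := sqrt_pos.2 hp
  refine (hasStieltjesTransform_rpow_mul_one_sq_mul hp).mul_resolventKernel_of_sqrt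
    ae_restrict_Ioi_nonneg hp ?_ fun s hs ↦ ?_
  · fun_prop (disch := positivity)
  · rw [← sq_sqrt hp.le, sqrt_sq hsp.le]
    field_simp
    ring

lemma H_two_two_one_integrand_eq {x y u : ℝ} (hx : 0 ≤ x) (hy : 0 ≤ y) (hu : 0 < u) :
    (u + 1) ^ (-2 : ℤ) * (u * x + 1) ^ (-2 : ℤ) * (u * y + 1)⁻¹ * u ^ ((7 : ℝ) / 2) =
      u ^ (-(3 / 2) : ℝ) * resolventKernel 1 u * resolventKernel 1 u * resolventKernel x u *
        resolventKernel x u * resolventKernel y u := by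
  have hpow : u ^ ((7 : ℝ) / 2) = u ^ (-(3 / 2) : ℝ) * u ^ 5 := by
    rw [← rpow_natCast, ← rpow_add hu]
    norm_num
  simp only [hpow, resolventKernel, mul_one, zpow_neg, zpow_ofNat]
  field_simp

/-- For all reals `x, y > 0`, the integral
`H₂₂₁(x,y) = ∫₀^∞ (u+1)⁻² (ux+1)⁻² (uy+1)⁻¹ u^(7/2) du` converges and equals the
stated rational expression in `√x, √y`. -/
theorem H_two_two_one_eval (x y : ℝ) (hx : 0 < x) (hy : 0 < y) :
    IntegrableOn
      (fun u : ℝ =>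
        (u + 1) ^ (-2 : ℤ) * (u * x + 1) ^ (-2 : ℤ) * (u * y + 1)⁻¹ *
          u ^ ((7 : ℝ) / 2))
      (Set.Ioi 0) ∧
    ∫ u in Set.Ioi (0 : ℝ),
        (u + 1) ^ (-2 : ℤ) * (u * x + 1) ^ (-2 : ℤ) * (u * y + 1)⁻¹ *
          u ^ ((7 : ℝ) / 2) =
      Real.pi * (2 * (x ^ ((3 : ℝ) / 2) + 4 * x + 4 * Real.sqrt x + 1) * y +
          (7 * x ^ ((3 : ℝ) / 2) + x ^ 2 + 13 * x + 7 * Real.sqrt x + 1) *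
            Real.sqrt y +
          (x + 3 * Real.sqrt x + 1) * y ^ ((3 : ℝ) / 2) +
          2 * (Real.sqrt x + 1) ^ 3 * Real.sqrt x) /
        (2 * (Real.sqrt x + 1) ^ 3 * x ^ ((3 : ℝ) / 2) * (Real.sqrt y + 1) ^ 2 *
          Real.sqrt y * (Real.sqrt x + Real.sqrt y) ^ 2) := by
  have heq : EqOn (fun u : ℝ ↦ u ^ (-(3 / 2) : ℝ) * resolventKernel 1 u * resolventKernel 1 u *
      resolventKernel x u * resolventKernel x u * resolventKernel y u)
      (fun u ↦ (u + 1) ^ (-2 : ℤ) * (u * x + 1) ^ (-2 : ℤ) * (u * y + 1)⁻¹ * u ^ ((7 : ℝ) / 2))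
      (Ioi 0) :=
    fun u hu ↦ (H_two_two_one_integrand_eq hx.le hy.le hu).symm
  obtain ⟨hint, hval⟩ := hasStieltjesTransform_rpow_mul_one_sq_mul_sq hx y hy
  have hx2 : √x ^ 2 = x := sq_sqrt hx.le
  have hx4 : √x ^ 4 = x ^ 2 := by rw [← hx2, sqrt_sq (sqrt_nonneg x)]; ring
  refine ⟨IntegrableOn.congr_fun hint heq measurableSet_Ioi, ?_⟩
  rw [← setIntegral_congr_fun measurableSet_Ioi heq, hval]
  simp only [Function.comp_apply, hx2, hx4, sq_sqrt hy.le, rpow_div_two_eq_sqrt 3 hx.le,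
    rpow_div_two_eq_sqrt 3 hy.le, rpow_ofNat]
  ring
end

section
/- For all real numbers x > 0 and y > 0 with x ≠ y, the integral H_{3,1,1}(x,y) = ∫₀^∞ (u+1)^{-3}(ux+1)^{-1}(uy+1)^{-1} u^{7/2} du converges and equals (π/(8(x − y)))·(−(3x + 9√x + 8)/((√x + 1)³√x) − 8/(√y + 1) − 5/(√y + 1)² − 2/(√y + 1)³ + 8/√y). -/
open MeasureTheory Real

/-!
Substituting `v = 1 / u` turns `H_{m₀,m₁,m₂}(x, y)` into the integral over `(0, ∞)` of
`v ^ (-1/2) * (v + 1) ^ (-m₀) * (v + x) ^ (-m₁) * (v + y) ^ (-m₂)`. Since `v ^ (-1/2) / (v + a)`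
has integral `π / √a`, this is, up to sign, `π` times the divided difference of `a ↦ 1 / √a` at the
nodes `1`, `x`, `y` with multiplicities `m₀`, `m₁`, `m₂`. Distinct nodes are separated by the
resolvent identity `(x - y) / ((v + x) * (v + y)) = 1 / (v + y) - 1 / (v + x)`; coinciding nodes
need the derivatives of `a ↦ 1 / √a`, which integration by parts supplies.
-/

section NodeIntegral

open Filter Set Topology

/-- The integrand attached to a multiset `s` of positive nodes, with repetitions giving powers. The
factor `u * √u` stands for `u ^ (3/2)`, so that for `v = 1 / u` this is
`v ^ (3/2) * ∏ a ∈ s, 1 / (v + a)`. -/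
noncomputable def nodeIntegrand (s : Multiset ℝ) (u : ℝ) : ℝ :=
  (s.map fun a ↦ u / (u * a + 1)).prod / (u * √u)

/-- The integral `H` attached to a multiset of nodes: `H_{m₀,m₁,m₂}(x, y)` is the case of the nodes
`1`, `x`, `y` with multiplicities `m₀`, `m₁`, `m₂`. -/
noncomputable def nodeIntegral (s : Multiset ℝ) : ℝ :=
  ∫ u in Ioi 0, nodeIntegrand s u

theorem nodeIntegrand_eq_prod_inv_mul_rpow {u : ℝ} (hu : 0 < u) (s : Multiset ℝ) :
    nodeIntegrand s u =
      (s.map fun a ↦ (u * a + 1)⁻¹).prod * u ^ ((Multiset.card s : ℝ) - 3 / 2) := by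
  have hpow : u * √u = u ^ (3 / 2 : ℝ) := by
    rw [sqrt_eq_rpow, ← rpow_one_add' hu.le (by norm_num)]
    norm_num
  simp only [nodeIntegrand, div_eq_mul_inv u, Multiset.prod_map_mul, Multiset.map_const',
    Multiset.prod_replicate, hpow, rpow_sub hu, rpow_natCast]
  ring

theorem nodeIntegrand_cons (a : ℝ) (s : Multiset ℝ) (u : ℝ) :
    nodeIntegrand (a ::ₘ s) u = u / (u * a + 1) * nodeIntegrand s u := by
  simp only [nodeIntegrand, Multiset.map_cons, Multiset.prod_cons, mul_div_assoc]

theorem nodeIntegrand_singleton {u : ℝ} (hu : 0 < u) (a : ℝ) :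
    nodeIntegrand {a} u = (√u * (u * a + 1))⁻¹ := by
  simp only [nodeIntegrand, Multiset.map_singleton, Multiset.prod_singleton]
  field_simp

theorem hasDerivAt_arctan_sqrt_mul_sqrt {a u : ℝ} (ha : 0 < a) (hu : 0 < u) :
    HasDerivAt (fun u ↦ 2 / √a * arctan (√a * √u)) (nodeIntegrand {a} u) u := by
  have harctan := ((hasDerivAt_sqrt hu.ne').const_mul √a).arctan.const_mul (2 / √a)
  refine harctan.congr_deriv ?_
  rw [nodeIntegrand_singleton hu, mul_pow, sq_sqrt ha.le, sq_sqrt hu.le]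
  field_simp
  ring

theorem tendsto_arctan_sqrt_mul_sqrt {a : ℝ} (ha : 0 < a) :
    Tendsto (fun u ↦ 2 / √a * arctan (√a * √u)) atTop (𝓝 (π / √a)) := by
  have harctan := (tendsto_arctan_atTop.mono_right nhdsWithin_le_nhds).comp
    (tendsto_sqrt_atTop.const_mul_atTop (sqrt_pos.2 ha))
  rw [show π / √a = 2 / √a * (π / 2) by ring]
  exact harctan.const_mul (2 / √a)

theorem integrableOn_nodeIntegrand_singleton {a : ℝ} (ha : 0 < a) :
    IntegrableOn (nodeIntegrand {a}) (Ioi 0) :=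
  integrableOn_Ioi_deriv_of_nonneg (by fun_prop)
    (fun _ hu ↦ hasDerivAt_arctan_sqrt_mul_sqrt ha hu)
    (fun u (hu : 0 < u) ↦ by rw [nodeIntegrand_singleton hu]; positivity)
    (tendsto_arctan_sqrt_mul_sqrt ha)

theorem nodeIntegral_singleton {a : ℝ} (ha : 0 < a) : nodeIntegral {a} = π / √a := by
  rw [nodeIntegral, integral_Ioi_of_hasDerivAt_of_tendsto (by fun_prop)
    (fun _ hu ↦ hasDerivAt_arctan_sqrt_mul_sqrt ha hu)
    (integrableOn_nodeIntegrand_singleton ha) (tendsto_arctan_sqrt_mul_sqrt ha)]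
  simp

theorem div_mul_add_one_le_inv {a u : ℝ} (ha : 0 < a) (hu : 0 ≤ u) : u / (u * a + 1) ≤ a⁻¹ := by
  rw [inv_eq_one_div, div_le_div_iff₀ (by positivity) ha]
  linarith

theorem integrableOn_nodeIntegrand_cons {s : Multiset ℝ} {a : ℝ} (ha : 0 < a)
    (hs : IntegrableOn (nodeIntegrand s) (Ioi 0)) :
    IntegrableOn (nodeIntegrand (a ::ₘ s)) (Ioi 0) := by
  have measurable_factor : Measurable fun u : ℝ ↦ u / (u * a + 1) := by fun_prop
  refine (Integrable.bdd_mul hs measurable_factor.aestronglyMeasurable (c := a⁻¹) ?_).congr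
    (.of_forall fun u ↦ (nodeIntegrand_cons a s u).symm)
  refine ae_restrict_of_forall_mem measurableSet_Ioi fun u (hu : 0 < u) ↦ ?_
  rw [norm_of_nonneg (by positivity)]
  exact div_mul_add_one_le_inv ha hu.le

theorem integrableOn_nodeIntegrand {s : Multiset ℝ} (hs : s ≠ 0) (hpos : ∀ a ∈ s, 0 < a) :
    IntegrableOn (nodeIntegrand s) (Ioi 0) := by
  induction s using Multiset.induction_on with
  | empty => exact absurd rfl hs
  | cons a s ih =>
    have ha := hpos a (Multiset.mem_cons_self a s)
    rcases eq_or_ne s 0 with rfl | hne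
    · exact integrableOn_nodeIntegrand_singleton ha
    · exact integrableOn_nodeIntegrand_cons ha
        (ih hne fun b hb ↦ hpos b (Multiset.mem_cons_of_mem hb))

theorem sub_mul_nodeIntegrand_cons_cons {x y u : ℝ} (hx : 0 < x) (hy : 0 < y) (hu : 0 < u)
    (s : Multiset ℝ) :
    (x - y) * nodeIntegrand (x ::ₘ y ::ₘ s) u =
      nodeIntegrand (y ::ₘ s) u - nodeIntegrand (x ::ₘ s) u := by
  simp only [nodeIntegrand_cons]
  field_simp
  ring

theorem nodeIntegral_cons_cons {x y : ℝ} (hxy : x ≠ y) {s : Multiset ℝ}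
    (hpos : ∀ a ∈ x ::ₘ y ::ₘ s, 0 < a) :
    nodeIntegral (x ::ₘ y ::ₘ s) =
      (nodeIntegral (y ::ₘ s) - nodeIntegral (x ::ₘ s)) / (x - y) := by
  simp only [Multiset.forall_mem_cons] at hpos
  obtain ⟨hx, hy, hs⟩ := hpos
  have integrable_cons {a : ℝ} (ha : 0 < a) : IntegrableOn (nodeIntegrand (a ::ₘ s)) (Ioi 0) :=
    integrableOn_nodeIntegrand Multiset.cons_ne_zero (Multiset.forall_mem_cons.2 ⟨ha, hs⟩)
  rw [eq_div_iff (sub_ne_zero.2 hxy), mul_comm, nodeIntegral, ← integral_const_mul,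
    setIntegral_congr_fun measurableSet_Ioi
      fun u hu ↦ sub_mul_nodeIntegrand_cons_cons hx hy hu s]
  exact integral_sub (integrable_cons hy) (integrable_cons hx)

theorem nodeIntegrand_replicate (n : ℕ) (a u : ℝ) :
    nodeIntegrand (Multiset.replicate n a) u = (u / (u * a + 1)) ^ n / (u * √u) := by
  simp only [nodeIntegrand, Multiset.map_replicate, Multiset.prod_replicate]

theorem hasDerivAt_div_mul_add_one {a u : ℝ} (h : u * a + 1 ≠ 0) :
    HasDerivAt (fun u ↦ u / (u * a + 1)) ((u * a + 1) ^ 2)⁻¹ u := by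
  have hden : HasDerivAt (fun u ↦ u * a + 1) a u := by
    simpa only [id, one_mul] using ((hasDerivAt_id u).mul_const a).add_const 1
  refine ((hasDerivAt_id u).div hden h).congr_deriv ?_
  simp only [id, one_mul, add_sub_cancel_left, one_div]

theorem hasDerivAt_pow_succ_div_sqrt {a u : ℝ} (ha : 0 < a) (hu : 0 < u) (n : ℕ) :
    HasDerivAt (fun u ↦ (u / (u * a + 1)) ^ (n + 1) / √u)
      ((n + 1 / 2) * nodeIntegrand (Multiset.replicate (n + 1) a) u -
        (n + 1) * a * nodeIntegrand (Multiset.replicate (n + 2) a) u) u := by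
  have hden : u * a + 1 ≠ 0 := by positivity
  refine (((hasDerivAt_div_mul_add_one hden).pow (n + 1)).div
    (hasDerivAt_sqrt hu.ne') (by positivity)).congr_deriv ?_
  have hlogistic : ((u * a + 1) ^ 2)⁻¹ = u / (u * a + 1) / u * (1 - a * (u / (u * a + 1))) := by
    field_simp
    ring
  rw [hlogistic]
  simp only [nodeIntegrand_replicate, Pi.pow_apply, Nat.add_sub_cancel, sq_sqrt hu.le]
  generalize u / (u * a + 1) = r
  field_simp
  rw [sq_sqrt hu.le]
  push_cast
  ring

theorem continuousAt_zero_pow_succ_div_sqrt (a : ℝ) (n : ℕ) :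
    ContinuousAt (fun u ↦ (u / (u * a + 1)) ^ (n + 1) / √u) 0 := by
  -- The value at `0` is the junk value `0 / 0 = 0`, which agrees with the limit.
  have hcancel (u : ℝ) :
      (u / (u * a + 1)) ^ (n + 1) / √u = (u / (u * a + 1)) ^ n * (√u / (u * a + 1)) := by
    rw [pow_succ, mul_div_assoc, div_right_comm, div_sqrt]
  simp only [hcancel]
  fun_prop (disch := simp)

theorem tendsto_pow_succ_div_sqrt {a : ℝ} (ha : 0 < a) (n : ℕ) :
    Tendsto (fun u ↦ (u / (u * a + 1)) ^ (n + 1) / √u) atTop (𝓝 0) := by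
  have hbound : Tendsto (fun u ↦ a⁻¹ ^ (n + 1) / √u) atTop (𝓝 0) :=
    tendsto_sqrt_atTop.const_div_atTop _
  refine squeeze_zero' ?_ ?_ hbound <;>
    filter_upwards [eventually_gt_atTop 0] with u hu
  · positivity
  · gcongr
    exact div_mul_add_one_le_inv ha hu.le

theorem nodeIntegral_replicate_succ_succ {a : ℝ} (ha : 0 < a) (n : ℕ) :
    (n + 1) * a * nodeIntegral (Multiset.replicate (n + 2) a) =
      (n + 1 / 2) * nodeIntegral (Multiset.replicate (n + 1) a) := by
  have integrable_replicate (m : ℕ) :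
      IntegrableOn (nodeIntegrand (Multiset.replicate (m + 1) a)) (Ioi 0) :=
    integrableOn_nodeIntegrand (by simp) fun b hb ↦
      (Multiset.eq_of_mem_replicate hb).symm ▸ ha
  have hint₁ := (integrable_replicate n).const_mul (n + 1 / 2 : ℝ)
  have hint₂ := (integrable_replicate (n + 1)).const_mul ((n + 1) * a)
  have hzero := integral_Ioi_of_hasDerivAt_of_tendsto
    (continuousAt_zero_pow_succ_div_sqrt a n).continuousWithinAt
    (fun u hu ↦ hasDerivAt_pow_succ_div_sqrt ha hu n)
    (hint₁.sub hint₂) (tendsto_pow_succ_div_sqrt ha n)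
  rw [integral_sub hint₁ hint₂, integral_const_mul, integral_const_mul, sqrt_zero, div_zero,
    sub_zero] at hzero
  exact (sub_eq_zero.1 hzero).symm

theorem nodeIntegral_replicate_sq {p : ℝ} (hp : 0 < p) (n : ℕ) :
    nodeIntegral (Multiset.replicate (n + 1) (p ^ 2)) =
      π * n.centralBinom / (4 ^ n * p ^ (2 * n + 1)) := by
  induction n with
  | zero => simpa [sqrt_sq hp.le] using nodeIntegral_singleton (pow_pos hp 2)
  | succ n ih =>
    have hbinom : ((n + 1).centralBinom : ℝ) = 2 * (2 * n + 1) * n.centralBinom / (n + 1) := by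
      rw [eq_div_iff (by positivity), mul_comm]
      exact mod_cast Nat.succ_mul_centralBinom_succ n
    have hcoef : (n + 1) * p ^ 2 ≠ 0 := by positivity
    apply mul_left_cancel₀ hcoef
    rw [nodeIntegral_replicate_succ_succ (pow_pos hp 2), ih, hbinom]
    field_simp
    ring

theorem nodeIntegral_sq_cons_replicate_sq {p q : ℝ} (hp : 0 < p) (hq : 0 < q) (hpq : p ≠ q)
    (n : ℕ) :
    nodeIntegral (p ^ 2 ::ₘ Multiset.replicate (n + 1) (q ^ 2)) =
      (π * n.centralBinom / (4 ^ n * q ^ (2 * n + 1)) -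
        nodeIntegral (p ^ 2 ::ₘ Multiset.replicate n (q ^ 2))) / (p ^ 2 - q ^ 2) := by
  have hne : p ^ 2 ≠ q ^ 2 := by rwa [Ne, sq_eq_sq₀ hp.le hq.le]
  have nodes_pos : ∀ a ∈ p ^ 2 ::ₘ q ^ 2 ::ₘ Multiset.replicate n (q ^ 2), 0 < a := by
    simp only [Multiset.mem_cons, Multiset.mem_replicate]
    rintro a (rfl | rfl | ⟨-, rfl⟩) <;> positivity
  rw [Multiset.replicate_succ, nodeIntegral_cons_cons hne nodes_pos, ← Multiset.replicate_succ,
    nodeIntegral_replicate_sq hq]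

theorem nodeIntegral_sq_cons_replicate_three_sq {p q : ℝ} (hp : 0 < p) (hq : 0 < q) :
    nodeIntegral (p ^ 2 ::ₘ Multiset.replicate 3 (q ^ 2)) =
      π / 8 * ((3 * p ^ 2 + 9 * p * q + 8 * q ^ 2) / (p * q ^ 5 * (p + q) ^ 3)) := by
  rcases eq_or_ne p q with rfl | hpq
  · rw [← Multiset.replicate_succ, nodeIntegral_replicate_sq hp,
      show Nat.centralBinom 3 = 20 from rfl]
    push_cast
    field_simp
    ring
  · have hsub : p ^ 2 - q ^ 2 ≠ 0 := by
      rwa [sub_ne_zero, Ne, sq_eq_sq₀ hp.le hq.le]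
    simp only [nodeIntegral_sq_cons_replicate_sq hp hq hpq, Multiset.replicate_zero,
      Multiset.cons_zero, nodeIntegral_singleton (pow_pos hp 2), sqrt_sq hp.le,
      Nat.centralBinom_zero, show Nat.centralBinom 1 = 2 from rfl,
      show Nat.centralBinom 2 = 6 from rfl]
    push_cast
    field_simp
    ring

theorem nodeIntegral_cons_replicate_three_one {a : ℝ} (ha : 0 < a) :
    nodeIntegral (a ::ₘ Multiset.replicate 3 1) =
      π / 8 * ((3 * a + 9 * √a + 8) / ((√a + 1) ^ 3 * √a)) := by
  simpa only [sq_sqrt ha.le, one_pow, mul_one, mul_comm _ ((√a + 1) ^ 3)] using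
    nodeIntegral_sq_cons_replicate_three_sq (sqrt_pos.2 ha) one_pos

theorem sqrt_partial_fractions {y : ℝ} (hy : 0 < y) :
    (3 * y + 9 * √y + 8) / ((√y + 1) ^ 3 * √y) =
      8 / √y - 8 / (√y + 1) - 5 / (√y + 1) ^ 2 - 2 / (√y + 1) ^ 3 := by
  nth_rewrite 1 [← sq_sqrt hy.le]
  field_simp
  ring

theorem eqOn_nodeIntegrand_three_one_one (x y : ℝ) :
    EqOn (fun u : ℝ ↦ (u + 1) ^ (-3 : ℤ) * (u * x + 1)⁻¹ * (u * y + 1)⁻¹ * u ^ ((7 : ℝ) / 2))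
      (nodeIntegrand (x ::ₘ y ::ₘ Multiset.replicate 3 1)) (Ioi 0) := by
  intro u hu
  have hzpow : (u + 1) ^ (-3 : ℤ) = (u + 1)⁻¹ ^ 3 := by
    rw [zpow_neg, inv_pow]
    norm_cast
  have hexp : ((Multiset.card (x ::ₘ y ::ₘ Multiset.replicate 3 1) : ℕ) : ℝ) - 3 / 2 = 7 / 2 := by
    simp only [Multiset.card_cons, Multiset.card_replicate]
    norm_num
  simp only [nodeIntegrand_eq_prod_inv_mul_rpow hu, hexp, hzpow, Multiset.map_cons,
    Multiset.map_replicate, Multiset.prod_cons, Multiset.prod_replicate, mul_one]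
  ring

end NodeIntegral

/-- For all reals `x, y > 0` with `x ≠ y`, the integral
`H₃₁₁(x,y) = ∫₀^∞ (u+1)⁻³ (ux+1)⁻¹ (uy+1)⁻¹ u^(7/2) du` converges and equals
`(π/(8(x−y)))(−(3x+9√x+8)/((√x+1)³√x) − 8/(√y+1) − 5/(√y+1)² − 2/(√y+1)³ + 8/√y)`. -/
theorem H_three_one_one_eval (x y : ℝ) (hx : 0 < x) (hy : 0 < y) (hxy : x ≠ y) :
    IntegrableOn
      (fun u : ℝ =>
        (u + 1) ^ (-3 : ℤ) * (u * x + 1)⁻¹ * (u * y + 1)⁻¹ * u ^ ((7 : ℝ) / 2))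
      (Set.Ioi 0) ∧
    ∫ u in Set.Ioi (0 : ℝ),
        (u + 1) ^ (-3 : ℤ) * (u * x + 1)⁻¹ * (u * y + 1)⁻¹ * u ^ ((7 : ℝ) / 2) =
      Real.pi / (8 * (x - y)) *
        (-((3 * x + 9 * Real.sqrt x + 8) / ((Real.sqrt x + 1) ^ 3 * Real.sqrt x)) -
          8 / (Real.sqrt y + 1) - 5 / (Real.sqrt y + 1) ^ 2 -
          2 / (Real.sqrt y + 1) ^ 3 + 8 / Real.sqrt y) := by
  have nodes_pos : ∀ a ∈ x ::ₘ y ::ₘ Multiset.replicate 3 1, 0 < a := by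
    simp [hx, hy]
  have hsub : x - y ≠ 0 := sub_ne_zero.2 hxy
  have integrand_eq := eqOn_nodeIntegrand_three_one_one x y
  rw [integrableOn_congr_fun integrand_eq measurableSet_Ioi,
    setIntegral_congr_fun measurableSet_Ioi integrand_eq, ← nodeIntegral,
    nodeIntegral_cons_cons hxy nodes_pos, nodeIntegral_cons_replicate_three_one hx,
    nodeIntegral_cons_replicate_three_one hy, sqrt_partial_fractions hy]
  refine ⟨integrableOn_nodeIntegrand Multiset.cons_ne_zero nodes_pos, ?_⟩
  field_simp
  ring
end
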